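/- arXiv:math/9711223 — 6 statements merged into one kernel-verified Lean document; each statement's English description precedes it below -/
import Mathlib

section
/- There exists a bijection F from (ℤ^ω) \ X onto ℝ \ ℚ, where X is the set of all f ∈ ℤ^ω that are eventually equal to −1 together with the constantly-0 sequence, such that for every A ⊆ ℝ \ ℚ, the set A is ℚ-nowhere dense if and only if F⁻¹(A) is small. -/
/-- `X ⊆ ℝ` is `ℚ`-nowhere dense: for every rational `q` there is a nonzero integer `k`
such that the open interval with endpoints `q` and `q + 1/k` is disjoint from `X`. -/
def QNowhereDense (X : Set ℝ) : Prop :=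
  ∀ q : ℚ, ∃ k : ℤ, k ≠ 0 ∧
    ∀ x ∈ X, x ∉ Set.Ioo (min (q : ℝ) ((q : ℝ) + 1 / (k : ℝ))) (max (q : ℝ) ((q : ℝ) + 1 / (k : ℝ)))

/-- `X ⊆ ℤ^ω` is small: for every `n` and every `σ : Fin n → ℤ` there is `k ∈ ℤ` such that
the set of values `f n` for `f ∈ X` extending `σ` lies entirely below `k` or entirely above `k`. -/
def SmallSet (X : Set (ℕ → ℤ)) : Prop :=
  ∀ (n : ℕ) (σ : Fin n → ℤ), ∃ k : ℤ,
    (∀ f ∈ X, (∀ i : Fin n, f (i : ℕ) = σ i) → f n < k) ∨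
    (∀ f ∈ X, (∀ i : Fin n, f (i : ℕ) = σ i) → k < f n)

/-- `f` is eventually equal to `-1`. -/
def EventuallyNegOne (f : ℕ → ℤ) : Prop := ∃ N : ℕ, ∀ n ≥ N, f n = -1

/-- The exceptional set `X`: sequences eventually `-1`, together with the constant `0` sequence. -/
def ExceptionalSet : Set (ℕ → ℤ) := {f | EventuallyNegOne f} ∪ {fun _ => (0 : ℤ)}

/-- increasing sequence of irrational points converging to `q` from `a`. -/
lemma exists_up (a : EReal) (q : ℚ) (h : a < ((q : ℝ) : EReal)) :
    ∃ u : ℕ → EReal, u 0 = a ∧ StrictMono u ∧ (∀ m, u m < ((q : ℝ) : EReal)) ∧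
      (∀ m (r : ℚ), u (m+1) ≠ ((r : ℝ) : EReal)) ∧
      (∀ y : ℝ, y < q → ∃ m, (y : EReal) < u m) := by
  have hs : (0:ℝ) < √2 := by positivity
  have arch : ∀ y : ℝ, y < q → ∃ N : ℕ, ∀ n ≥ N, y < q - √2 / (n + 1) := by
    intro y hy
    obtain ⟨N, hN⟩ := exists_nat_gt (√2 / (q - y))
    refine ⟨N, fun n hn => ?_⟩
    have h1 : (N:ℝ) ≤ n := by exact_mod_cast hn
    have h2 : 0 < (q:ℝ) - y := by linarith
    rw [div_lt_iff₀ h2] at hN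
    have : √2 / (n + 1) < q - y := by
      rw [div_lt_iff₀ (by positivity)]
      nlinarith
    linarith
  obtain ⟨z, hz1, hz2⟩ := EReal.lt_iff_exists_real_btwn.1 h
  obtain ⟨N, hN⟩ := arch z (by exact_mod_cast hz2)
  refine ⟨fun m => match m with
    | 0 => a
    | k+1 => (((q:ℝ) - √2 / (((N + k : ℕ) : ℝ) + 1) : ℝ) : EReal), rfl, ?_, ?_, ?_, ?_⟩
  · refine strictMono_nat_of_lt_succ ?_
    rintro (_ | k)
    · refine hz1.trans ?_
      have := hN (N+0) (by simp)
      exact EReal.coe_lt_coe_iff.2 this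
    · refine EReal.coe_lt_coe_iff.2 ?_
      apply sub_lt_sub_left
      apply div_lt_div_of_pos_left hs (by positivity)
      push_cast
      linarith
  · rintro (_ | k)
    · exact h
    · refine EReal.coe_lt_coe_iff.2 ?_
      have : 0 < √2 / (((N + k : ℕ) : ℝ) + 1) := by positivity
      linarith
  · intro m r hr
    have hr' : (q:ℝ) - √2 / (((N + m : ℕ) : ℝ) + 1) = r := EReal.coe_eq_coe_iff.1 hr
    have h0 : (((N + m : ℕ) : ℝ) + 1) ≠ 0 := by positivity
    apply irrational_sqrt_two
    refine ⟨(q - r) * ((N + m : ℕ) + 1), ?_⟩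
    push_cast
    push_cast at h0 hr'
    rw [← hr']
    field_simp
    ring
  · intro y hy
    obtain ⟨M, hM⟩ := arch y hy
    exact ⟨M+1, EReal.coe_lt_coe_iff.2 (hM (N+M) (by omega))⟩

lemma exists_down (b : EReal) (q : ℚ) (h : ((q : ℝ) : EReal) < b) :
    ∃ u : ℕ → EReal, u 0 = b ∧ StrictAnti u ∧ (∀ m, ((q : ℝ) : EReal) < u m) ∧
      (∀ m (r : ℚ), u (m+1) ≠ ((r : ℝ) : EReal)) ∧
      (∀ y : ℝ, q < y → ∃ m, u m < (y : EReal)) := by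
  obtain ⟨u, h0, h1, h2, h3, h4⟩ := exists_up (-b) (-q) (by
    push_cast
    exact EReal.neg_lt_neg_iff.2 h)
  refine ⟨fun m => - u m, by simp [h0], fun i j hij => EReal.neg_lt_neg_iff.2 (h1 hij), ?_, ?_, ?_⟩
  · intro m
    have := EReal.neg_lt_neg_iff.2 (h2 m)
    push_cast at this
    simpa using this
  · intro m r hr
    apply h3 m (-r)
    have hr : - u (m+1) = ((r : ℝ) : EReal) := hr
    rw [← neg_neg (u (m+1)), hr]
    push_cast
    rfl
  · intro y hy
    obtain ⟨m, hm⟩ := h4 (-y) (by push_cast; linarith)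
    refine ⟨m, ?_⟩
    have := EReal.neg_lt_neg_iff.2 hm
    push_cast at this
    simpa using this

/-- Half-open intervals without rational endpoints. -/
structure QNode where
  lo : EReal
  hi : EReal
  lt : lo < hi
  hlo : ∀ r : ℚ, lo ≠ ((r : ℝ) : EReal)
  hhi : ∀ r : ℚ, hi ≠ ((r : ℝ) : EReal)

def QNode.mem (S : QNode) (x : ℝ) : Prop := S.lo ≤ (x : EReal) ∧ (x : EReal) < S.hi

lemma locate_up (u : ℕ → EReal) (x : EReal) (h0 : u 0 ≤ x) (h : ∃ m, x < u m) :
    ∃ k, u k ≤ x ∧ x < u (k+1) := by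
  classical
  have h1 := Nat.find_spec h
  have h2 : Nat.find h ≠ 0 := fun h' => by
    rw [h'] at h1
    exact absurd h1 (not_lt.2 h0)
  obtain ⟨k, hk⟩ := Nat.exists_eq_succ_of_ne_zero h2
  refine ⟨k, not_lt.1 (Nat.find_min h (by omega)), ?_⟩
  rw [hk] at h1
  exact h1

lemma locate_down (u : ℕ → EReal) (x : EReal) (h0 : x < u 0) (h : ∃ m, u m ≤ x) :
    ∃ k, u (k+1) ≤ x ∧ x < u k := by
  classical
  have h1 := Nat.find_spec h
  have h2 : Nat.find h ≠ 0 := fun h' => by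
    rw [h'] at h1
    exact absurd h1 (not_le.2 h0)
  obtain ⟨k, hk⟩ := Nat.exists_eq_succ_of_ne_zero h2
  refine ⟨k, ?_, not_le.1 (Nat.find_min h (by omega))⟩
  rw [hk] at h1
  exact h1

structure IsSplit (S : QNode) (q : ℚ) (c : ℤ → QNode) : Prop where
  qmem : S.mem q
  qmin : ∀ r : ℚ, S.mem r → Encodable.encode q ≤ Encodable.encode r
  lo_le : ∀ m, S.lo ≤ (c m).lo
  hi_le : ∀ m, (c m).hi ≤ S.hi
  lo_zero : (c 0).lo = S.lo
  hi_neg : (c (-1)).hi = S.hi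
  lo_ne : ∀ m, m ≠ 0 → S.lo < (c m).lo
  hi_ne : ∀ m, m ≠ -1 → (c m).hi < S.hi
  ex : ∀ x : ℝ, S.mem x → x ≠ q → ∃ m, (c m).mem x
  uniq : ∀ (x : ℝ) m m', (c m).mem x → (c m').mem x → m = m'
  notq : ∀ m, ¬ (c m).mem q
  conv_up : ∀ y : ℝ, y < q → ∃ M : ℤ, ∀ m ≥ M, ∀ x, (c m).mem x → y < x ∧ x < q
  conv_dn : ∀ y : ℝ, q < y → ∃ M : ℤ, ∀ m ≤ M, ∀ x, (c m).mem x → q < x ∧ x < y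
  nb_up : ∀ M : ℤ, ∃ y : ℝ, y < q ∧ ∀ x : ℝ, y < x → x < q → ∃ m ≥ M, (c m).mem x
  nb_dn : ∀ M : ℤ, ∃ y : ℝ, q < y ∧ ∀ x : ℝ, q < x → x < y → ∃ m ≤ M, (c m).mem x

lemma QNode.exists_rat (S : QNode) : ∃ r : ℚ, S.mem r := by
  obtain ⟨r, h1, h2⟩ := EReal.lt_iff_exists_rat_btwn.1 S.lt
  exact ⟨r, h1.le, h2⟩

lemma exists_split (S : QNode) : ∃ q c, IsSplit S q c := by
  classical
  obtain ⟨q, hq, hmin⟩ : ∃ q : ℚ, S.mem q ∧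
      ∀ r : ℚ, S.mem r → Encodable.encode q ≤ Encodable.encode r := by
    have hne : {r : ℚ | S.mem r}.Nonempty := S.exists_rat
    refine ⟨Function.argminOn (Encodable.encode : ℚ → ℕ) {r : ℚ | S.mem r} hne,
      Function.argminOn_mem _ _ hne, fun r hr =>
        Function.argminOn_le (Encodable.encode : ℚ → ℕ) {r : ℚ | S.mem r} (a := r) hr⟩
  obtain ⟨u, u0, u1, u2, u3, u4⟩ := exists_up S.lo q (lt_of_le_of_ne hq.1 (S.hlo q))
  obtain ⟨v, v0, v1, v2, v3, v4⟩ := exists_down S.hi q hq.2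
  have ur : ∀ m (r : ℚ), u m ≠ ((r : ℝ) : EReal) := by
    rintro (_ | k) r
    · rw [u0]; exact S.hlo r
    · exact u3 k r
  have vr : ∀ m (r : ℚ), v m ≠ ((r : ℝ) : EReal) := by
    rintro (_ | k) r
    · rw [v0]; exact S.hhi r
    · exact v3 k r
  have uv : ∀ i j, u i < v j := fun i j => (u2 i).trans (v2 j)
  have ulo : ∀ i, S.lo ≤ u i := fun i => u0 ▸ u1.monotone (Nat.zero_le i)
  have vhi : ∀ i, v i ≤ S.hi := fun i => v0 ▸ v1.antitone (Nat.zero_le i)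
  have uhi : ∀ i, u i < S.hi := fun i => v0 ▸ uv i 0
  have vlo : ∀ i, S.lo < v i := fun i => u0 ▸ uv 0 i
  let c : ℤ → QNode := fun m => match m with
    | Int.ofNat k => ⟨u k, u (k+1), u1 (Nat.lt_succ_self k), ur _, ur _⟩
    | Int.negSucc k => ⟨v (k+1), v k, v1 (Nat.lt_succ_self k), vr _, vr _⟩
  have cu : ∀ (k : ℕ) (x : ℝ), (c (Int.ofNat k)).mem x ↔ u k ≤ x ∧ (x : EReal) < u (k+1) :=
    fun k x => Iff.rfl
  have cv : ∀ (k : ℕ) (x : ℝ), (c (Int.negSucc k)).mem x ↔ v (k+1) ≤ x ∧ (x : EReal) < v k :=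
    fun k x => Iff.rfl
  have exu : ∀ (K : ℕ) (x : ℝ), u K ≤ x → x < q → ∃ k ≥ K, u k ≤ x ∧ (x : EReal) < u (k+1) := by
    intro K x h1 h2
    obtain ⟨m, hm⟩ := u4 x h2
    obtain ⟨k, hk1, hk2⟩ := locate_up u x ((u1.monotone (Nat.zero_le K)).trans h1) ⟨m, hm⟩
    refine ⟨k, ?_, hk1, hk2⟩
    have := u1.lt_iff_lt.1 (h1.trans_lt hk2)
    omega
  have exv : ∀ (K : ℕ) (x : ℝ), (x : EReal) < v K → q < x →
      ∃ k ≥ K, v (k+1) ≤ x ∧ (x : EReal) < v k := by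
    intro K x h1 h2
    obtain ⟨m, hm⟩ := v4 x h2
    obtain ⟨k, hk1, hk2⟩ := locate_down v x (h1.trans_le (v1.antitone (Nat.zero_le K))) ⟨m, hm.le⟩
    refine ⟨k, ?_, hk1, hk2⟩
    have := v1.lt_iff_gt.1 (hk1.trans_lt h1)
    omega
  refine ⟨q, c, hq, hmin, ?_, ?_, u0, v0, ?_, ?_, ?_, ?_, ?_, ?_, ?_, ?_, ?_⟩
  · rintro (k | k)
    · exact ulo k
    · exact (vlo _).le
  · rintro (k | k)
    · exact (uhi _).le
    · exact vhi k
  · rintro (k | k) hk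
    · have : k ≠ 0 := by rintro rfl; exact hk rfl
      exact u0 ▸ u1 (Nat.pos_of_ne_zero this)
    · exact vlo _
  · rintro (k | k) hk
    · exact uhi _
    · have : k ≠ 0 := by rintro rfl; exact hk rfl
      exact v0 ▸ v1 (Nat.pos_of_ne_zero this)
  · intro x hx hxq
    rcases lt_or_gt_of_ne hxq with h | h
    · obtain ⟨k, -, hk⟩ := exu 0 x (u0 ▸ hx.1) h
      exact ⟨Int.ofNat k, hk⟩
    · obtain ⟨k, -, hk⟩ := exv 0 x (v0 ▸ hx.2) h
      exact ⟨Int.negSucc k, hk⟩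
  · rintro x (k | k) (l | l) h1 h2
    · have a1 := u1.lt_iff_lt.1 (h1.1.trans_lt h2.2)
      have a2 := u1.lt_iff_lt.1 (h2.1.trans_lt h1.2)
      have : k = l := by omega
      rw [this]
    · exact absurd (h2.1.trans_lt h1.2) (uv _ _).not_gt
    · exact absurd (h1.1.trans_lt h2.2) (uv _ _).not_gt
    · have a1 := v1.lt_iff_gt.1 (h1.1.trans_lt h2.2)
      have a2 := v1.lt_iff_gt.1 (h2.1.trans_lt h1.2)
      have : k = l := by omega
      rw [this]
  · rintro (k | k) h
    · exact absurd h.2 (u2 _).not_gt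
    · exact absurd h.1 (v2 _).not_ge
  · intro y hy
    obtain ⟨M, hM⟩ := u4 y hy
    refine ⟨Int.ofNat M, ?_⟩
    rintro (k | k) hk x hx
    · have : M ≤ k := by simpa using hk
      exact ⟨EReal.coe_lt_coe_iff.1 (hM.trans_le ((u1.monotone this).trans hx.1)),
        EReal.coe_lt_coe_iff.1 (hx.2.trans (u2 _))⟩
    · simp only [Int.ofNat_eq_natCast] at hk
      omega
  · intro y hy
    obtain ⟨M, hM⟩ := v4 y hy
    refine ⟨Int.negSucc M, ?_⟩
    rintro (k | k) hk x hx
    · simp only [Int.ofNat_eq_natCast] at hk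
      omega
    · have : M ≤ k := by omega
      exact ⟨EReal.coe_lt_coe_iff.1 ((v2 _).trans_le hx.1),
        EReal.coe_lt_coe_iff.1 (hx.2.trans_le ((v1.antitone this).trans hM.le))⟩
  · intro M
    obtain ⟨y, hy1, hy2⟩ := EReal.lt_iff_exists_real_btwn.1 (u2 M.toNat)
    refine ⟨y, EReal.coe_lt_coe_iff.1 hy2, fun x h1 h2 => ?_⟩
    obtain ⟨k, hk, hk'⟩ := exu M.toNat x (hy1.le.trans (EReal.coe_le_coe_iff.2 h1.le)) h2
    refine ⟨Int.ofNat k, ?_, hk'⟩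
    simp only [Int.ofNat_eq_natCast]
    omega
  · intro M
    obtain ⟨y, hy1, hy2⟩ := EReal.lt_iff_exists_real_btwn.1 (v2 (-M).toNat)
    refine ⟨y, EReal.coe_lt_coe_iff.1 hy1, fun x h1 h2 => ?_⟩
    obtain ⟨k, hk, hk'⟩ := exv (-M).toNat x ((EReal.coe_lt_coe_iff.2 h2).trans hy2) h1
    refine ⟨Int.negSucc k, ?_, hk'⟩
    omega

noncomputable def QNode.q (S : QNode) : ℚ := (exists_split S).choose
noncomputable def QNode.c (S : QNode) : ℤ → QNode := (exists_split S).choose_spec.choose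
lemma QNode.split (S : QNode) : IsSplit S S.q S.c := (exists_split S).choose_spec.choose_spec

noncomputable def rootNode : QNode := ⟨⊥, ⊤, by simp, fun r => (EReal.coe_ne_bot _).symm, fun r => (EReal.coe_ne_top _).symm⟩

noncomputable def nodeAt (f : ℕ → ℤ) : ℕ → QNode
  | 0 => rootNode
  | n+1 => (nodeAt f n).c (f n)

lemma nodeAt_congr (f g : ℕ → ℤ) (n : ℕ) (h : ∀ i < n, f i = g i) : nodeAt f n = nodeAt g n := by
  induction n with
  | zero => rfl
  | succ n ih =>
    simp only [nodeAt]
    rw [ih (fun i hi => h i (by omega)), h n (by omega)]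

lemma QNode.mem_of_child (S : QNode) (m : ℤ) (x : ℝ) (h : (S.c m).mem x) : S.mem x :=
  ⟨(S.split.lo_le m).trans h.1, h.2.trans_le (S.split.hi_le m)⟩

lemma agree (f g : ℕ → ℤ) (x : ℝ) (hg : ∀ n, (nodeAt g n).mem x) (n : ℕ)
    (h : (nodeAt f n).mem x) : ∀ i < n, g i = f i := by
  induction n with
  | zero => intro i hi; omega
  | succ n ih =>
    have ih := ih (QNode.mem_of_child _ _ _ h)
    intro i hi
    rcases Nat.lt_succ_iff_lt_or_eq.1 hi with h' | rfl
    · exact ih i h'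
    · have h1 := hg (i+1)
      simp only [nodeAt] at h h1
      rw [nodeAt_congr g f i ih] at h1
      exact (nodeAt f i).split.uniq x _ _ h1 h

lemma no_rat (f : ℕ → ℤ) (r : ℚ) (h : ∀ n, (nodeAt f n).mem r) : False := by
  have key : ∀ n, n ≤ Encodable.encode (nodeAt f n).q := by
    intro n
    induction n with
    | zero => exact Nat.zero_le _
    | succ n ih =>
      have hm : (nodeAt f (n+1)).mem (nodeAt f (n+1)).q := (nodeAt f (n+1)).split.qmem
      have h1 := (nodeAt f n).split.qmin _ (QNode.mem_of_child _ _ _ hm)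
      have h2 : Encodable.encode (nodeAt f n).q ≠ Encodable.encode (nodeAt f (n+1)).q := by
        intro he
        have he := Encodable.encode_injective he
        apply (nodeAt f n).split.notq (f n)
        rw [he]
        exact hm
      omega
  have h1 := key (Encodable.encode r + 1)
  have h2 := (nodeAt f (Encodable.encode r + 1)).split.qmin r (h _)
  omega

lemma branch_unique (f : ℕ → ℤ) (x y : ℝ) (hx : ∀ n, (nodeAt f n).mem x)
    (hy : ∀ n, (nodeAt f n).mem y) : x = y := by
  have key : ∀ x y : ℝ, (∀ n, (nodeAt f n).mem x) → (∀ n, (nodeAt f n).mem y) → ¬ x < y := by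
    intro x y hx hy h
    obtain ⟨r, h1, h2⟩ := exists_rat_btwn h
    exact no_rat f r fun n => ⟨(hx n).1.trans (EReal.coe_le_coe_iff.2 h1.le),
      (EReal.coe_lt_coe_iff.2 h2).trans (hy n).2⟩
  exact le_antisymm (not_lt.1 (key y x hy hx)) (not_lt.1 (key x y hx hy))

lemma lo_mono (f : ℕ → ℤ) : Monotone fun n => (nodeAt f n).lo :=
  monotone_nat_of_le_succ fun n => (nodeAt f n).split.lo_le _

lemma hi_anti (f : ℕ → ℤ) : Antitone fun n => (nodeAt f n).hi :=
  antitone_nat_of_succ_le fun n => (nodeAt f n).split.hi_le _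

lemma branch_exists (f : ℕ → ℤ) (hf : f ∈ ExceptionalSetᶜ) :
    ∃ x : ℝ, Irrational x ∧ ∀ n, (nodeAt f n).mem x := by
  simp only [ExceptionalSet, Set.mem_compl_iff, Set.mem_union, Set.mem_ofPred_eq,
    Set.mem_singleton_iff, not_or, EventuallyNegOne, not_exists, not_forall] at hf
  obtain ⟨h1, h2⟩ := hf
  set z : EReal := ⨆ n, (nodeAt f n).lo with hz
  have zlo : ∀ n, (nodeAt f n).lo ≤ z := fun n => le_iSup (fun n => (nodeAt f n).lo) n
  have lohi : ∀ i j, (nodeAt f i).lo ≤ (nodeAt f j).hi := fun i j =>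
    (lo_mono f (le_max_left i j)).trans ((nodeAt f (max i j)).lt.le.trans
      (hi_anti f (le_max_right i j)))
  have zhi : ∀ n, z ≤ (nodeAt f n).hi := fun n => iSup_le fun i => lohi i n
  have zlt : ∀ n, z < (nodeAt f n).hi := by
    intro n
    obtain ⟨m, hm, hne⟩ := h1 n
    exact (zhi (m+1)).trans_lt (((nodeAt f m).split.hi_ne _ hne).trans_le (hi_anti f hm))
  have hbot : ⊥ < z := by
    obtain ⟨n, hn⟩ := Function.ne_iff.1 h2
    exact bot_le.trans_lt (((nodeAt f n).split.lo_ne _ hn).trans_le (zlo (n+1)))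
  have htop : z < ⊤ := zlt 0
  lift z to ℝ using ⟨htop.ne, hbot.ne'⟩ with x
  refine ⟨x, ?_, fun n => ⟨zlo n, zlt n⟩⟩
  rintro ⟨r, rfl⟩
  exact no_rat f r fun n => ⟨zlo n, zlt n⟩

lemma not_exceptional (f : ℕ → ℤ) (x : ℝ) (h : ∀ n, (nodeAt f n).mem x) :
    f ∈ ExceptionalSetᶜ := by
  rintro (⟨N, hN⟩ | hf)
  · have hc : ∀ n, (nodeAt f N).hi ≤ (nodeAt f n).hi := by
      intro n
      have : ∀ k, (nodeAt f (N+k)).hi = (nodeAt f N).hi := by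
        intro k
        induction k with
        | zero => rfl
        | succ k ih =>
          rw [← ih, ← add_assoc]
          simp only [nodeAt]
          rw [hN (N+k) (by omega)]
          exact (nodeAt f (N+k)).split.hi_neg
      rw [← this n]
      exact hi_anti f (by omega)
    obtain ⟨r, h1, h2⟩ := EReal.lt_iff_exists_rat_btwn.1 (h N).2
    exact no_rat f r fun n => ⟨(h n).1.trans h1.le, lt_of_lt_of_le h2 (hc n)⟩
  · have hf : f = fun _ => 0 := hf
    have hc : ∀ n, (nodeAt f n).lo = ⊥ := by
      intro n
      induction n with
      | zero => rfl
      | succ n ih =>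
        rw [← ih]
        simp only [nodeAt]
        rw [show f n = 0 by rw [hf]]
        exact (nodeAt f n).split.lo_zero
    obtain ⟨r, hr⟩ := exists_rat_lt x
    exact no_rat f r fun n => ⟨by rw [hc n]; exact bot_le,
      (EReal.coe_lt_coe_iff.2 hr).trans (h n).2⟩

lemma trace (x : ℝ) : (∃ f, ∀ n, (nodeAt f n).mem x) ∨ ∃ f n, x = (nodeAt f n).q := by
  classical
  let pick : QNode → ℤ := fun S => if h : ∃ m, (S.c m).mem x then h.choose else 0
  let T : ℕ → QNode := fun n => Nat.rec rootNode (fun _ S => S.c (pick S)) n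
  let f : ℕ → ℤ := fun n => pick (T n)
  have hT : ∀ n, nodeAt f n = T n := by
    intro n
    induction n with
    | zero => rfl
    | succ n ih =>
      simp only [nodeAt]
      rw [ih]
  by_cases hq : ∃ n, x = (nodeAt f n).q
  · exact Or.inr ⟨f, hq⟩
  · left
    push Not at hq
    refine ⟨f, fun n => ?_⟩
    induction n with
    | zero => exact ⟨bot_le, EReal.coe_lt_top x⟩
    | succ n ih =>
      have hex := (nodeAt f n).split.ex x ih (hq n)
      have : f n = hex.choose := by
        simp only [f, pick]
        rw [← hT n, dif_pos hex]
      simp only [nodeAt]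
      rw [this]
      exact hex.choose_spec

theorem stmt0 :
    ∃ F : (ℕ → ℤ) → ℝ,
      Set.BijOn F (ExceptionalSet)ᶜ {x : ℝ | Irrational x} ∧
      ∀ A ⊆ {x : ℝ | Irrational x},
        QNowhereDense A ↔ SmallSet ((ExceptionalSet)ᶜ ∩ F ⁻¹' A) := by
  classical
  have hex : ∀ f : ℕ → ℤ, ∃ x : ℝ, f ∈ ExceptionalSetᶜ →
      Irrational x ∧ ∀ n, (nodeAt f n).mem x := by
    intro f
    by_cases hf : f ∈ ExceptionalSetᶜ
    · obtain ⟨x, hx⟩ := branch_exists f hf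
      exact ⟨x, fun _ => hx⟩
    · exact ⟨0, fun h => absurd h hf⟩
  choose F hF using hex
  have hsurj : ∀ x : ℝ, Irrational x → ∃ f ∈ ExceptionalSetᶜ, F f = x := by
    intro x hx
    rcases trace x with ⟨f, hf⟩ | ⟨f, n, h⟩
    · have he := not_exceptional f x hf
      exact ⟨f, he, branch_unique f _ _ (hF f he).2 hf⟩
    · exact absurd ⟨_, h.symm⟩ hx
  refine ⟨F, ⟨fun f hf => (hF f hf).1, ?_, fun x hx => hsurj x hx⟩, ?_⟩
  · intro f hf g hg hfg
    funext i
    refine agree g f (F f) (hF f hf).2 (i+1) ?_ i (by omega)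
    rw [hfg]
    exact (hF g hg).2 _
  intro A hA
  constructor
  · intro hN n σ
    let f0 : ℕ → ℤ := fun i => if h : i < n then σ ⟨i, h⟩ else 0
    have hnode : ∀ f : ℕ → ℤ, (∀ i : Fin n, f i = σ i) → nodeAt f n = nodeAt f0 n := by
      intro f hf
      apply nodeAt_congr
      intro i hi
      simp only [f0, dif_pos hi]
      exact hf ⟨i, hi⟩
    have hs := (nodeAt f0 n).split
    have hmem : ∀ f ∈ ExceptionalSetᶜ, (∀ i : Fin n, f i = σ i) →
        ((nodeAt f0 n).c (f n)).mem (F f) := by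
      intro f hf hσ
      rw [← hnode f hσ]
      exact (hF f hf).2 (n+1)
    obtain ⟨k, hk, hd⟩ := hN (nodeAt f0 n).q
    rcases lt_or_gt_of_ne hk with hk | hk
    · have hk' : (1 : ℝ) / k < 0 := one_div_neg.2 (by exact_mod_cast hk)
      rw [min_eq_right (by linarith), max_eq_left (by linarith)] at hd
      obtain ⟨M, hM⟩ := hs.conv_up ((nodeAt f0 n).q + 1 / k) (by linarith)
      refine ⟨M, Or.inl fun f hf hσ => ?_⟩
      by_contra hlt
      exact hd _ hf.2 (hM _ (not_lt.1 hlt) _ (hmem f hf.1 hσ))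
    · have hk' : 0 < (1 : ℝ) / k := one_div_pos.2 (by exact_mod_cast hk)
      rw [min_eq_left (by linarith), max_eq_right (by linarith)] at hd
      obtain ⟨M, hM⟩ := hs.conv_dn ((nodeAt f0 n).q + 1 / k) (by linarith)
      refine ⟨M, Or.inr fun f hf hσ => ?_⟩
      by_contra hlt
      exact hd _ hf.2 (hM _ (not_lt.1 hlt) _ (hmem f hf.1 hσ))
  · intro hS q
    obtain ⟨f, n, hq⟩ : ∃ f n, q = (nodeAt f n).q := by
      rcases trace q with ⟨f, hf⟩ | ⟨f, n, h⟩
      · exact (no_rat f q hf).elim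
      · exact ⟨f, n, by exact_mod_cast h⟩
    have hs := (nodeAt f n).split
    rw [← hq] at hs
    have key : ∀ x ∈ A, ∀ m, ((nodeAt f n).c m).mem x →
        ∃ g ∈ ExceptionalSetᶜ ∩ F ⁻¹' A, (∀ i : Fin n, g i = f i) ∧ g n = m := by
      intro x hx m hm
      obtain ⟨g, hg, rfl⟩ := hsurj x (hA hx)
      have hag := agree f g _ (hF g hg).2 n (QNode.mem_of_child _ _ _ hm)
      refine ⟨g, ⟨hg, hx⟩, fun i => hag i i.2, ?_⟩
      have h1 := (hF g hg).2 (n+1)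
      simp only [nodeAt] at h1
      rw [nodeAt_congr g f n hag] at h1
      exact hs.uniq _ _ _ h1 hm
    obtain ⟨k, hk | hk⟩ := hS n (fun i => f i)
    · obtain ⟨y, hy, hy'⟩ := hs.nb_up k
      obtain ⟨j, hj⟩ := exists_nat_one_div_lt (sub_pos.2 hy)
      have hj0 : (0:ℝ) < 1 / ((j:ℝ) + 1) := by positivity
      have he : (1:ℝ) / ((-((j:ℤ) + 1) : ℤ) : ℝ) = - (1 / ((j:ℝ) + 1)) := by
        push_cast
        rw [div_neg]
      refine ⟨-((j:ℤ)+1), by omega, fun x hx hI => ?_⟩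
      rw [he, min_eq_right (by linarith), max_eq_left (by linarith)] at hI
      obtain ⟨m, hm, hmx⟩ := hy' x (by linarith [hI.1]) hI.2
      obtain ⟨g, hg, hg1, hg2⟩ := key x hx m hmx
      have := hk g hg hg1
      omega
    · obtain ⟨y, hy, hy'⟩ := hs.nb_dn k
      obtain ⟨j, hj⟩ := exists_nat_one_div_lt (sub_pos.2 hy)
      have hj0 : (0:ℝ) < 1 / ((j:ℝ) + 1) := by positivity
      have he : (1:ℝ) / ((((j:ℤ) + 1) : ℤ) : ℝ) = (1 / ((j:ℝ) + 1)) := by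
        push_cast
        rfl
      refine ⟨((j:ℤ)+1), by omega, fun x hx hI => ?_⟩
      rw [he, min_eq_left (by linarith), max_eq_right (by linarith)] at hI
      obtain ⟨m, hm, hmx⟩ := hy' x hI.1 (by linarith [hI.2])
      obtain ⟨g, hg, hg1, hg2⟩ := key x hx m hmx
      have := hk g hg hg1
      omega
end

section
/- The least cardinal κ such that ℝ is the union of a family of κ many ℚ-very meagre sets is equal to the least cardinal κ such that ℤ^ω is the union of a family of κ many small sets. -/
open Cardinal

/-- `X ⊆ ℝ` is `ℚ`-very meagre: a countable union of `ℚ`-nowhere dense sets. -/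
def QVeryMeagre (X : Set ℝ) : Prop :=
  ∃ g : ℕ → Set ℝ, (∀ n, QNowhereDense (g n)) ∧ X = ⋃ n, g n

/-! ### Countably many small sets do not cover -/

noncomputable def diagFun (m : ∀ n : ℕ, (Fin n → ℤ) → ℤ) : ℕ → ℤ
  | n => m n (fun i => diagFun m i)
termination_by n => n
decreasing_by exact i.2

lemma not_countable_cover (S : Set (Set (ℕ → ℤ))) (hS : ∀ A ∈ S, SmallSet A)
    (hU : ⋃₀ S = Set.univ) (hc : S.Countable) : False := by
  have hne : S.Nonempty := by
    have h : (fun _ => 0 : ℕ → ℤ) ∈ ⋃₀ S := by rw [hU]; trivial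
    obtain ⟨A, hA, _⟩ := h
    exact ⟨A, hA⟩
  obtain ⟨X, rfl⟩ := hc.exists_eq_range hne
  have key : ∀ (n : ℕ) (σ : Fin n → ℤ), ∃ m : ℤ, ∀ f ∈ X n,
      (∀ i : Fin n, f (i : ℕ) = σ i) → f n ≠ m := by
    intro n σ
    obtain ⟨k, h | h⟩ := hS (X n) ⟨n, rfl⟩ n σ
    · exact ⟨k, fun f hf hσ => (h f hf hσ).ne⟩
    · exact ⟨k, fun f hf hσ => (h f hf hσ).ne'⟩
  choose m hm using key
  have h : diagFun m ∈ ⋃₀ Set.range X := by rw [hU]; trivial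
  obtain ⟨_, ⟨n, rfl⟩, hn⟩ := h
  exact hm n (fun i => diagFun m i) _ hn (fun i => rfl) (by rw [diagFun])

/-! ### From the reals to `ℤ^ω` -/

noncomputable def psi (e : ℕ → ℚ) (x : ℝ) (n : ℕ) : ℤ := ⌊√2 / (x - (e n : ℝ))⌋

lemma psi_locally_const (e : ℕ → ℚ) (i : ℕ) (q : ℚ) (h : e i ≠ q) :
    ∀ᶠ x in nhds (q : ℝ), psi e x i = psi e (q : ℝ) i := by
  have h0 : (q : ℝ) - (e i : ℝ) ≠ 0 := by
    rw [sub_ne_zero]; exact_mod_cast h.symm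
  have hcont : ContinuousAt (fun x : ℝ => √2 / (x - (e i : ℝ))) (q : ℝ) := by
    have hd : ContinuousAt (fun x : ℝ => x - (e i : ℝ)) (q : ℝ) := by fun_prop
    exact ContinuousAt.div continuousAt_const hd h0
  have hirr : Irrational (√2 / ((q : ℝ) - (e i : ℝ))) := by
    have := irrational_sqrt_two.div_ratCast (q := q - e i) (by
      rw [sub_ne_zero]; exact h.symm)
    simpa using this
  have hlt : ((⌊√2 / ((q : ℝ) - (e i : ℝ))⌋ : ℤ) : ℝ) < √2 / ((q : ℝ) - (e i : ℝ)) :=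
    lt_of_le_of_ne (Int.floor_le _) (fun hh => hirr.ne_int _ hh.symm)
  have hlt2 := Int.lt_floor_add_one (√2 / ((q : ℝ) - (e i : ℝ)))
  filter_upwards [hcont.eventually (lt_mem_nhds hlt), hcont.eventually (gt_mem_nhds hlt2)]
    with x h1 h2
  unfold psi
  rw [Int.floor_eq_iff]
  exact ⟨h1.le, h2⟩

lemma psi_preimage (e : ℕ → ℚ) (he : Function.Bijective e) (A : Set (ℕ → ℤ)) (hA : SmallSet A) :
    QNowhereDense (psi e ⁻¹' A) := by
  intro q
  obtain ⟨n, hn⟩ := he.2 q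
  have hev : ∀ᶠ x in nhds (q : ℝ), ∀ i : Fin n, psi e x i = psi e (q : ℝ) i := by
    rw [Filter.eventually_all]
    intro i
    apply psi_locally_const
    rw [← hn]
    intro h
    exact i.2.ne (he.1 h)
  obtain ⟨ε, hε, hball⟩ := Metric.eventually_nhds_iff.1 hev
  obtain ⟨N, hN⟩ := exists_nat_gt (1 / ε)
  have hNpos : (0 : ℝ) < N := lt_trans (by positivity) hN
  have hs : (1 : ℝ) < √2 := by
    rw [Real.lt_sqrt] <;> norm_num
  obtain ⟨k, hk⟩ := hA n (fun i => psi e (q : ℝ) i)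
  have hKN : (0 : ℝ) < (N : ℝ) + |(k : ℝ)| := by positivity
  have hsmall : 1 / ((N : ℝ) + |(k : ℝ)|) < ε := by
    rw [div_lt_iff₀ hKN]
    rw [div_lt_iff₀ hε] at hN
    nlinarith [abs_nonneg (k : ℝ)]
  have hKZ : (0 : ℤ) < (N : ℤ) + |k| := by exact_mod_cast hKN
  rcases hk with hk | hk
  · refine ⟨(N : ℤ) + |k|, hKZ.ne', ?_⟩
    intro x hx hmem
    push_cast at hmem
    have hpos : 0 < 1 / ((N : ℝ) + |(k : ℝ)|) := by positivity
    rw [min_eq_left (by linarith), max_eq_right (by linarith)] at hmem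
    obtain ⟨h1, h2⟩ := hmem
    have h3 := hk _ hx (hball (by rw [Real.dist_eq, abs_lt]; constructor <;> linarith))
    unfold psi at h3
    rw [hn, Int.floor_lt, div_lt_iff₀ (by linarith)] at h3
    have h4 : (x - q) * ((N : ℝ) + |(k : ℝ)|) < 1 := by
      rw [← lt_div_iff₀ hKN]; linarith
    nlinarith [le_abs_self (k : ℝ)]
  · refine ⟨-((N : ℤ) + |k|), by omega, ?_⟩
    intro x hx hmem
    push_cast at hmem
    have hpos : 0 < 1 / ((N : ℝ) + |(k : ℝ)|) := by positivity
    rw [one_div_neg_eq_neg_one_div] at hmem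
    rw [min_eq_right (by linarith), max_eq_left (by linarith)] at hmem
    obtain ⟨h1, h2⟩ := hmem
    have h3 := hk _ hx (hball (by rw [Real.dist_eq, abs_lt]; constructor <;> linarith))
    unfold psi at h3
    have h3' : (k : ℝ) < √2 / (x - q) := by
      rw [hn] at h3
      exact lt_of_lt_of_le (by exact_mod_cast h3) (Int.floor_le _)
    rw [lt_div_iff_of_neg (by linarith)] at h3'
    have h4 : (q - x) * ((N : ℝ) + |(k : ℝ)|) < 1 := by
      rw [← lt_div_iff₀ hKN]; linarith
    nlinarith [neg_abs_le (k : ℝ)]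

/-! ### From `ℤ^ω` to the reals -/

def sv (m : ℤ) : ℚ := if 0 ≤ m then 1 / ((m : ℚ) + 1) else 1 / ((m : ℚ) - 1)

def wt (f : ℕ → ℤ) (n : ℕ) : ℚ := ∏ i ∈ Finset.range n, (|sv (f i)| / 4)

def tm (f : ℕ → ℤ) (n : ℕ) : ℚ := sv (f n) * wt f n

noncomputable def phi (f : ℕ → ℤ) : ℝ := ∑' n, (tm f n : ℝ)

lemma sv_ne (m : ℤ) : sv m ≠ 0 := by
  unfold sv
  split_ifs with h
  · have : (0 : ℚ) ≤ m := by exact_mod_cast h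
    positivity
  · have : (m : ℚ) < 0 := by exact_mod_cast not_le.1 h
    exact one_div_ne_zero (by linarith)

lemma sv_abs (m : ℤ) : |sv m| ≤ 1 := by
  unfold sv
  split_ifs with h
  · have : (0 : ℚ) ≤ m := by exact_mod_cast h
    rw [abs_of_pos (by positivity), div_le_one (by positivity)]
    linarith
  · have : (m : ℚ) < 0 := by exact_mod_cast not_le.1 h
    rw [abs_div, abs_one, div_le_one (abs_pos.2 (by linarith)), abs_of_neg (by linarith)]
    linarith

lemma wt_pos (f : ℕ → ℤ) (n : ℕ) : 0 < wt f n :=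
  Finset.prod_pos fun i _ => by have := abs_pos.2 (sv_ne (f i)); positivity

lemma wt_succ (f : ℕ → ℤ) (n : ℕ) : wt f (n + 1) = |tm f n| / 4 := by
  unfold tm
  rw [abs_mul, abs_of_pos (wt_pos f n)]
  unfold wt
  rw [Finset.prod_range_succ]
  ring

lemma tm_le_wt (f : ℕ → ℤ) (n : ℕ) : |tm f n| ≤ wt f n := by
  unfold tm
  rw [abs_mul, abs_of_pos (wt_pos f n)]
  have := sv_abs (f n)
  have := wt_pos f n
  nlinarith

lemma tm_bound (f : ℕ → ℤ) (n j : ℕ) : |tm f (n + j)| ≤ |tm f n| * (1 / 4) ^ j := by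
  induction j with
  | zero => simp
  | succ j ih =>
    have h1 := tm_le_wt f (n + j + 1)
    rw [wt_succ] at h1
    rw [pow_succ, ← add_assoc]
    linarith

lemma wt_le_one (f : ℕ → ℤ) (n : ℕ) : wt f n ≤ 1 := by
  cases n with
  | zero => simp [wt]
  | succ n =>
    rw [wt_succ]
    have h := tm_bound f 0 n
    have h1 := tm_le_wt f 0
    simp only [zero_add] at h
    have h2 : wt f 0 = 1 := by simp [wt]
    have h3 : ((1 : ℚ) / 4) ^ n ≤ 1 := pow_le_one₀ (by norm_num) (by norm_num)
    have h4 : (0 : ℚ) ≤ (1 / 4) ^ n := by positivity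
    nlinarith [abs_nonneg (tm f 0)]

lemma geo_hasSum (c : ℝ) : HasSum (fun j : ℕ => c * (1 / 4 : ℝ) ^ j) (c * (4 / 3)) := by
  have := (hasSum_geometric_of_lt_one (r := (1 / 4 : ℝ)) (by norm_num) (by norm_num)).mul_left c
  have h : (1 - 1 / 4 : ℝ)⁻¹ = 4 / 3 := by norm_num
  rwa [h] at this

lemma tm_bound_real (f : ℕ → ℤ) (n j : ℕ) :
    ‖(tm f (j + n) : ℝ)‖ ≤ |(tm f n : ℝ)| * (1 / 4) ^ j := by
  have := tm_bound f n j
  rw [Real.norm_eq_abs, add_comm]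
  have h : ((|tm f (n + j)| : ℚ) : ℝ) ≤ ((|tm f n| * (1 / 4) ^ j : ℚ) : ℝ) := by
    exact_mod_cast this
  push_cast at h
  exact h

lemma phi_tail (f : ℕ → ℤ) (n : ℕ) :
    |phi f - ((∑ i ∈ Finset.range n, tm f i : ℚ) : ℝ) - (tm f n : ℝ)| ≤ |(tm f n : ℝ)| / 3 := by
  have hsum : Summable (fun j => (tm f j : ℝ)) :=
    Summable.of_norm_bounded (geo_hasSum _).summable (fun j => tm_bound_real f 0 j)
  have h1 := hsum.sum_add_tsum_nat_add (n + 1)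
  rw [Finset.sum_range_succ] at h1
  have h2 : ‖∑' i, (tm f (i + (n + 1)) : ℝ)‖ ≤ |(tm f (n + 1) : ℝ)| * (4 / 3) :=
    tsum_of_norm_bounded (geo_hasSum _) (fun j => tm_bound_real f (n + 1) j)
  have h3 : |(tm f (n + 1) : ℝ)| ≤ |(tm f n : ℝ)| / 4 := by
    have := tm_le_wt f (n + 1)
    rw [wt_succ] at this
    exact_mod_cast this
  unfold phi
  rw [← h1]
  push_cast
  rw [Real.norm_eq_abs] at h2
  rw [add_assoc, add_sub_cancel_left, add_sub_cancel_left]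
  linarith

lemma phi_preimage (X : Set ℝ) (hX : QNowhereDense X) : SmallSet (phi ⁻¹' X) := by
  intro n σ
  let g : ℕ → ℤ := fun i => if h : i < n then σ ⟨i, h⟩ else 0
  obtain ⟨k, hk0, hk⟩ := hX (∑ i ∈ Finset.range n, tm g i)
  have hext : ∀ f : ℕ → ℤ, (∀ i : Fin n, f (i : ℕ) = σ i) →
      ∑ i ∈ Finset.range n, tm g i = ∑ i ∈ Finset.range n, tm f i := by
    intro f hf
    have hfg : ∀ i < n, g i = f i := by
      intro i hi
      simp only [g, hi, dif_pos]
      exact (hf ⟨i, hi⟩).symm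
    apply Finset.sum_congr rfl
    intro i hi
    rw [Finset.mem_range] at hi
    unfold tm wt
    rw [hfg i hi]
    congr 1
    apply Finset.prod_congr rfl
    intro j hj
    rw [Finset.mem_range] at hj
    rw [hfg j (hj.trans hi)]
  refine ⟨2 * k, ?_⟩
  rcases lt_or_gt_of_ne hk0 with hneg | hpos
  · right
    intro f hf hσ
    by_contra hlt
    rw [not_lt] at hlt
    have h := hk _ hf
    rw [hext f hσ] at h
    apply h
    have ht := phi_tail f n
    generalize ((∑ i ∈ Finset.range n, tm f i : ℚ) : ℝ) = q at ht ⊢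
    have hkr : (k : ℝ) < 0 := by exact_mod_cast hneg
    have hkr1 : (k : ℝ) ≤ -1 := by exact_mod_cast (show k ≤ -1 by omega)
    have hfr : (f n : ℝ) ≤ 2 * k := by exact_mod_cast hlt
    have hs : (sv (f n) : ℝ) = 1 / ((f n : ℝ) - 1) := by
      unfold sv
      rw [if_neg (by omega)]
      push_cast
      rfl
    have hs0 : (sv (f n) : ℝ) < 0 := by
      rw [hs]; exact one_div_neg.2 (by linarith)
    have hs1 : 1 / (2 * (k : ℝ)) ≤ sv (f n) := by
      rw [hs]
      exact one_div_le_one_div_of_neg_of_le (by linarith) (by linarith)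
    have hw0 : (0 : ℝ) < wt f n := by exact_mod_cast wt_pos f n
    have hw1 : (wt f n : ℝ) ≤ 1 := by exact_mod_cast wt_le_one f n
    have htm : (tm f n : ℝ) = sv (f n) * wt f n := by unfold tm; push_cast; rfl
    have ht0 : (tm f n : ℝ) < 0 := by rw [htm]; exact mul_neg_of_neg_of_pos hs0 hw0
    have ht1 : 1 / (2 * (k : ℝ)) ≤ tm f n := by rw [htm]; nlinarith
    have hk1 : 1 / (k : ℝ) < 0 := one_div_neg.2 hkr
    have hk2 : 1 / (2 * (k : ℝ)) = (1 / k) / 2 := by field_simp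
    rw [hk2] at ht1
    rw [min_eq_right (by linarith), max_eq_left (by linarith)]
    rw [abs_of_neg ht0, abs_le] at ht
    constructor <;> linarith
  · left
    intro f hf hσ
    by_contra hlt
    rw [not_lt] at hlt
    have h := hk _ hf
    rw [hext f hσ] at h
    apply h
    have ht := phi_tail f n
    generalize ((∑ i ∈ Finset.range n, tm f i : ℚ) : ℝ) = q at ht ⊢
    have hkr : (0 : ℝ) < k := by exact_mod_cast hpos
    have hfr : 2 * (k : ℝ) ≤ f n := by exact_mod_cast hlt
    have hs : (sv (f n) : ℝ) = 1 / ((f n : ℝ) + 1) := by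
      unfold sv
      rw [if_pos (by omega)]
      push_cast
      rfl
    have hs0 : (0 : ℝ) < sv (f n) := by
      rw [hs]; exact one_div_pos.2 (by linarith)
    have hs1 : (sv (f n) : ℝ) ≤ 1 / (2 * (k : ℝ)) := by
      rw [hs]
      exact one_div_le_one_div_of_le (by linarith) (by linarith)
    have hw0 : (0 : ℝ) < wt f n := by exact_mod_cast wt_pos f n
    have hw1 : (wt f n : ℝ) ≤ 1 := by exact_mod_cast wt_le_one f n
    have htm : (tm f n : ℝ) = sv (f n) * wt f n := by unfold tm; push_cast; rfl
    have ht0 : (0 : ℝ) < tm f n := by rw [htm]; exact mul_pos hs0 hw0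
    have ht1 : (tm f n : ℝ) ≤ 1 / (2 * (k : ℝ)) := by rw [htm]; nlinarith
    have hk1 : 0 < 1 / (k : ℝ) := one_div_pos.2 hkr
    have hk2 : 1 / (2 * (k : ℝ)) = (1 / k) / 2 := by field_simp
    rw [hk2] at ht1
    rw [min_eq_left (by linarith), max_eq_right (by linarith)]
    rw [abs_of_pos ht0, abs_le] at ht
    constructor <;> linarith

/-! ### Transfer of covers -/

lemma cover_real_of_small (S : Set (Set (ℕ → ℤ))) (hS : ∀ A ∈ S, SmallSet A)
    (hU : ⋃₀ S = Set.univ) :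
    ∃ T : Set (Set ℝ), (∀ A ∈ T, QVeryMeagre A) ∧ ⋃₀ T = Set.univ ∧ #T ≤ #S := by
  obtain ⟨e⟩ : Nonempty (ℕ ≃ ℚ) := ⟨(Denumerable.eqv ℚ).symm⟩
  refine ⟨(fun A => psi e ⁻¹' A) '' S, ?_, ?_, mk_image_le⟩
  · rintro _ ⟨A, hA, rfl⟩
    exact ⟨fun _ => psi e ⁻¹' A, fun _ => psi_preimage e e.bijective A (hS A hA),
      (Set.iUnion_const _).symm⟩
  · rw [Set.eq_univ_iff_forall]
    intro x
    have h : psi e x ∈ ⋃₀ S := by rw [hU]; trivial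
    obtain ⟨A, hA, hx⟩ := h
    exact ⟨_, ⟨A, hA, rfl⟩, hx⟩

lemma cover_small_of_real (S : Set (Set ℝ)) (hS : ∀ A ∈ S, QVeryMeagre A)
    (hU : ⋃₀ S = Set.univ) :
    ∃ T : Set (Set (ℕ → ℤ)), (∀ A ∈ T, SmallSet A) ∧ ⋃₀ T = Set.univ ∧ #T ≤ #S := by
  choose g hg hgU using hS
  let F : S × ℕ → Set (ℕ → ℤ) := fun p => phi ⁻¹' (g p.1.1 p.1.2 p.2)
  have h1 : ∀ A ∈ Set.range F, SmallSet A := by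
    rintro _ ⟨p, rfl⟩
    exact phi_preimage _ (hg _ _ _)
  have h2 : ⋃₀ Set.range F = Set.univ := by
    rw [Set.eq_univ_iff_forall]
    intro f
    have h : phi f ∈ ⋃₀ S := by rw [hU]; trivial
    obtain ⟨A, hA, hx⟩ := h
    rw [hgU A hA, Set.mem_iUnion] at hx
    obtain ⟨n, hn⟩ := hx
    exact ⟨_, ⟨(⟨A, hA⟩, n), rfl⟩, hn⟩
  refine ⟨Set.range F, h1, h2, ?_⟩
  have h3 : ℵ₀ ≤ #S := by
    by_contra hlt
    rw [not_le] at hlt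
    have : Countable S := mk_le_aleph0_iff.1 hlt.le
    exact not_countable_cover _ h1 h2 (Set.countable_range F)
  calc #(Set.range F) ≤ #(S × ℕ) := mk_range_le
    _ = #S * ℵ₀ := by simp
    _ = #S := mul_aleph0_eq h3

theorem stmt1 :
    sInf {c : Cardinal |
        ∃ S : Set (Set ℝ), (∀ A ∈ S, QVeryMeagre A) ∧ ⋃₀ S = Set.univ ∧ #S = c} =
    sInf {c : Cardinal |
        ∃ S : Set (Set (ℕ → ℤ)), (∀ A ∈ S, SmallSet A) ∧ ⋃₀ S = Set.univ ∧ #S = c} := by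
  apply le_antisymm
  · apply le_csInf
    · refine ⟨_, Set.range (fun f : ℕ → ℤ => ({f} : Set (ℕ → ℤ))), ?_, ?_, rfl⟩
      · rintro _ ⟨f, rfl⟩ n σ
        refine ⟨f n + 1, Or.inl ?_⟩
        rintro _ rfl _
        omega
      · rw [Set.eq_univ_iff_forall]
        intro f
        exact ⟨_, ⟨f, rfl⟩, rfl⟩
    · rintro c ⟨S, hS, hU, rfl⟩
      obtain ⟨T, hT, hTU, hle⟩ := cover_real_of_small S hS hU
      refine le_trans (csInf_le' ?_) hle
      exact ⟨T, hT, hTU, rfl⟩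
  · apply le_csInf
    · obtain ⟨T, hT, hTU, -⟩ := cover_real_of_small
        (Set.range (fun f : ℕ → ℤ => ({f} : Set (ℕ → ℤ)))) (by
          rintro _ ⟨f, rfl⟩ n σ
          refine ⟨f n + 1, Or.inl ?_⟩
          rintro _ rfl _
          omega) (by
          rw [Set.eq_univ_iff_forall]
          intro f
          exact ⟨_, ⟨f, rfl⟩, rfl⟩)
      exact ⟨_, T, hT, hTU, rfl⟩
    · rintro c ⟨S, hS, hU, rfl⟩
      obtain ⟨T, hT, hTU, hle⟩ := cover_small_of_real S hS hU
      refine le_trans (csInf_le' ?_) hle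
      exact ⟨T, hT, hTU, rfl⟩
end

section
/- Every ℚ-very meagre subset of ℝ is meagre in ℝ (with its usual topology). -/
theorem stmt3 (X : Set ℝ) (hX : QVeryMeagre X) : IsMeagre X := by
  obtain ⟨g, hg, rfl⟩ := hX
  refine isMeagre_iUnion fun n => IsNowhereDense.isMeagre ?_
  unfold IsNowhereDense
  by_contra hne
  obtain ⟨q, hq⟩ := Rat.isDenseEmbedding_coe_real.dense.exists_mem_open isOpen_interior
    (Set.nonempty_iff_ne_empty.mpr hne)
  obtain ⟨k, hk, hd⟩ := hg n q
  have hk' : (1 : ℝ) / (k : ℝ) ≠ 0 := one_div_ne_zero (Int.cast_ne_zero.mpr hk)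
  generalize (1 : ℝ) / (k : ℝ) = d at hd hk'
  have hlt : min (q : ℝ) (q + d) ≠ max (q : ℝ) (q + d) := by
    intro h
    have h1 := min_le_left (q : ℝ) (q + d)
    have h2 := min_le_right (q : ℝ) (q + d)
    have h3 := le_max_left (q : ℝ) (q + d)
    have h4 := le_max_right (q : ℝ) (q + d)
    exact hk' (by linarith)
  have hcl : (q : ℝ) ∈ closure (Set.Ioo (min (q : ℝ) (q + d)) (max (q : ℝ) (q + d))) := by
    rw [closure_Ioo hlt]
    exact ⟨min_le_left _ _, le_max_left _ _⟩
  obtain ⟨y, hy1, hy2⟩ := mem_closure_iff.mp hcl _ isOpen_interior hq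
  obtain ⟨x, hx1, hx2⟩ := mem_closure_iff.mp (interior_subset hy1) _ isOpen_Ioo hy2
  exact hd x hx2 hx1
end

section
/- Let i, j, n, m be integers with i + 1 ≤ j, i < n and j < m. Then for every set A ⊆ ω × {0,…,n−1} that is not contained in any set B_n(a,k) with a an i-element subset of {0,…,n−1} and k ∈ ω, and for every function H : A → (ω × {0,…,m−1})^ω, there exist a finite tree t of finite sequences from ω × {0,…,m−1} (closed under initial segments), a function F assigning to each τ ∈ t a set of the form B_m(a,k) with a a j-element subset of {0,…,m−1} and k ∈ ω, a finite set C ⊆ (ω × {0,…,m−1})^ω, and sets B₀, B₁ ⊆ A with B₀ ∪ B₁ not contained in any B_n(a,k) (a an i-element subset of {0,…,n−1}, k ∈ ω), such that: (i) for all distinct b, b′ ∈ B₀ there exist τ ∈ t and distinct y, y′ ∈ F(τ) such that τ⌢y is an initial segment of H(b) and τ⌢y′ is an initial segment of H(b′); and (ii) for every N ∈ ω the set {b ∈ B₁ : for every c ∈ C, H(b)↾N is not an initial segment of c} is finite. -/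
/-- `B_n(a,k) = (ω × a) ∪ ({0,…,k−1} × ({0,…,n−1} \ a))` as a subset of `ω × {0,…,n−1}`. -/
def Bset (n : ℕ) (a : Finset (Fin n)) (k : ℕ) : Set (ℕ × Fin n) :=
  {p | p.2 ∈ a ∨ (p.1 < k ∧ p.2 ∉ a)}

/-- The finite sequence `l` is an initial segment of the infinite sequence `f`. -/
def IsInitSeg {Y : Type*} (l : List Y) (f : ℕ → Y) : Prop :=
  l = (List.range l.length).map f

theorem isInitSeg_iff {Y : Type*} (l : List Y) (f : ℕ → Y) :
    IsInitSeg l f ↔ ∀ p (h : p < l.length), l[p] = f p := by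
  unfold IsInitSeg
  constructor
  · intro h p hp
    have := congrArg (fun q => q[p]?) h
    simp [hp] at this
    exact this
  · intro h
    apply List.ext_getElem
    · simp
    · intro p h1 h2
      simp [h p h1]

theorem isInitSeg_map {Y : Type*} (N : ℕ) (f g : ℕ → Y) :
    IsInitSeg ((List.range N).map f) g ↔ ∀ p < N, f p = g p := by
  rw [isInitSeg_iff]
  simp

theorem isInitSeg_snoc {Y : Type*} (l : List Y) (y : Y) (f : ℕ → Y) :
    IsInitSeg (l ++ [y]) f ↔ IsInitSeg l f ∧ y = f l.length := by
  unfold IsInitSeg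
  simp [List.range_succ]

noncomputable def pickSeq {α : Type*} (X : ℕ → Set α) (hX : ∀ k, (X k).Infinite) (k : ℕ) : α :=
  ((hX k).diff (Set.finite_range (fun l : Fin k => pickSeq X hX l.1))).nonempty.some
termination_by k
decreasing_by exact l.2

theorem exists_inj_nat {α : Type*} (X : ℕ → Set α) (hX : ∀ k, (X k).Infinite) :
    ∃ f : ℕ → α, f.Injective ∧ ∀ k, f k ∈ X k := by
  have key : ∀ k, pickSeq X hX k ∈ X k \ Set.range (fun l : Fin k => pickSeq X hX l.1) := by
    intro k
    rw [pickSeq]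
    exact Set.Nonempty.some_mem _
  have hlt : ∀ k l, l < k → pickSeq X hX l ≠ pickSeq X hX k := by
    intro k l hl h
    exact (key k).2 ⟨⟨l, hl⟩, h⟩
  refine ⟨pickSeq X hX, ?_, fun k => (key k).1⟩
  intro k l h
  rcases lt_trichotomy k l with h1 | h1 | h1
  · exact absurd h (hlt _ _ h1)
  · exact h1
  · exact absurd h.symm (hlt _ _ h1)

theorem exists_inj_countable {ι α : Type*} [Countable ι] (X : ι → Set α)
    (hX : ∀ k, (X k).Infinite) :
    ∃ f : ι → α, f.Injective ∧ ∀ k, f k ∈ X k := by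
  rcases isEmpty_or_nonempty ι with h | h
  · exact ⟨fun k => (h.false k).elim, fun k => (h.false k).elim, fun k => (h.false k).elim⟩
  · obtain ⟨e, he⟩ := exists_surjective_nat ι
    obtain ⟨f, hf, hfX⟩ := exists_inj_nat (fun k => X (e k)) (fun k => hX _)
    refine ⟨fun k => f (Function.surjInv he k), hf.comp (Function.injective_surjInv he), ?_⟩
    intro k
    have := hfX (Function.surjInv he k)
    rwa [Function.surjInv_eq he] at this

theorem column_dichotomy {P : Type*} {m : ℕ} (h : P → ℕ → ℕ × Fin m) (X : Set P)
    (hX : X.Infinite)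
    (hnot : ¬ ∃ (X' : Set P) (c : ℕ → ℕ × Fin m), X' ⊆ X ∧ X'.Infinite ∧
      ∀ N : ℕ, {b ∈ X' | ¬ IsInitSeg ((List.range N).map (h b)) c}.Finite) :
    ∃ (τ : List (ℕ × Fin m)) (d : Fin m) (X' : Set P), X' ⊆ X ∧ X'.Infinite ∧
      (∀ b ∈ X', IsInitSeg τ (h b) ∧ (h b τ.length).2 = d) ∧
      Set.InjOn (fun b => h b τ.length) X' := by
  by_cases hc : ∃ τ : List (ℕ × Fin m),
      ((fun b => h b τ.length) '' {b ∈ X | IsInitSeg τ (h b)}).Infinite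
  · obtain ⟨τ, hτ⟩ := hc
    obtain ⟨d, hd⟩ : ∃ d : Fin m,
        (((fun b => h b τ.length) '' {b ∈ X | IsInitSeg τ (h b)}) ∩ {z | z.2 = d}).Infinite := by
      by_contra hcon
      push Not at hcon
      apply hτ
      refine (Set.finite_iUnion hcon).subset ?_
      intro z hz
      exact Set.mem_iUnion.2 ⟨z.2, hz, rfl⟩
    obtain ⟨X', hX', hbij⟩ := Set.SurjOn.exists_bijOn_subset
      (f := fun b => h b τ.length)
      (s := {b ∈ X | IsInitSeg τ (h b)})
      (t := (((fun b => h b τ.length) '' {b ∈ X | IsInitSeg τ (h b)}) ∩ {z | z.2 = d}))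
      (fun z hz => hz.1)
    refine ⟨τ, d, X', fun b hb => (hX' hb).1, ?_, ?_, hbij.injOn⟩
    · intro hfin
      apply hd
      rw [← hbij.image_eq]
      exact hfin.image _
    · intro b hb
      exact ⟨(hX' hb).2, (hbij.mapsTo hb).2⟩
  · exfalso
    apply hnot
    push Not at hc
    have step : ∀ τ : List (ℕ × Fin m), ∃ y : ℕ × Fin m, {b ∈ X | IsInitSeg τ (h b)}.Infinite →
        {b ∈ X | IsInitSeg (τ ++ [y]) (h b)}.Infinite := by
      intro τ
      obtain ⟨b0, _⟩ := hX.nonempty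
      by_contra hcon
      push Not at hcon
      have hinf := (hcon (h b0 0)).1
      apply hinf
      refine ((hc τ).biUnion (fun y _ => (hcon y).2)).subset ?_
      intro b hb
      refine Set.mem_biUnion (Set.mem_image_of_mem _ hb) ?_
      exact ⟨hb.1, (isInitSeg_snoc _ _ _).2 ⟨hb.2, rfl⟩⟩
    choose g hg using step
    let s : ℕ → List (ℕ × Fin m) := fun k => Nat.rec [] (fun _ τ => τ ++ [g τ]) k
    let c : ℕ → ℕ × Fin m := fun k => g (s k)
    have hs : ∀ k, s k = (List.range k).map c := by
      intro k
      induction k with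
      | zero => rfl
      | succ k ih =>
        rw [List.range_succ, List.map_append, ← ih]
        rfl
    have hsinf : ∀ k, {b ∈ X | IsInitSeg (s k) (h b)}.Infinite := by
      intro k
      induction k with
      | zero =>
        convert hX using 1
        ext b
        simp [s, IsInitSeg]
      | succ k ih => exact hg _ ih
    obtain ⟨f, hf, hfX⟩ := exists_inj_nat _ hsinf
    refine ⟨Set.range f, c, ?_, Set.infinite_range_of_injective hf, ?_⟩
    · rintro _ ⟨k, rfl⟩
      exact (hfX k).1
    · intro N
      refine ((Set.finite_lt_nat N).image f).subset ?_
      rintro _ ⟨⟨k, rfl⟩, hk⟩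
      refine ⟨k, ?_, rfl⟩
      by_contra hkN
      apply hk
      have := (hfX k).2
      rw [hs, isInitSeg_map] at this
      rw [isInitSeg_map]
      intro p hp
      refine (this p ?_).symm
      simp at hkN
      omega

theorem stmt7 (i j n m : ℕ) (hij : i + 1 ≤ j) (hin : i < n) (hjm : j < m)
    (A : Set (ℕ × Fin n))
    (hA : ¬ ∃ (a : Finset (Fin n)) (k : ℕ), a.card = i ∧ A ⊆ Bset n a k)
    (H : ℕ × Fin n → ℕ → ℕ × Fin m) :
    ∃ (t : Set (List (ℕ × Fin m))) (F : List (ℕ × Fin m) → Set (ℕ × Fin m))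
      (C : Set (ℕ → ℕ × Fin m)) (B₀ B₁ : Set (ℕ × Fin n)),
      -- `t` is a finite tree of finite sequences, closed under initial segments
      t.Finite ∧ (∀ s ∈ t, ∀ r : List (ℕ × Fin m), r <+: s → r ∈ t) ∧
      -- `F` assigns to each node of `t` a set of the form `B_m(a,k)` with `a` of size `j`
      (∀ τ ∈ t, ∃ (a : Finset (Fin m)) (k : ℕ), a.card = j ∧ F τ = Bset m a k) ∧
      -- `C` is a finite set of infinite sequences
      C.Finite ∧
      -- `B₀, B₁ ⊆ A` and `B₀ ∪ B₁` is contained in no `B_n(a,k)` with `a` of size `i`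
      B₀ ⊆ A ∧ B₁ ⊆ A ∧
      (¬ ∃ (a : Finset (Fin n)) (k : ℕ), a.card = i ∧ B₀ ∪ B₁ ⊆ Bset n a k) ∧
      -- (i) splitting condition on `B₀`
      (∀ b ∈ B₀, ∀ b' ∈ B₀, b ≠ b' →
        ∃ τ ∈ t, ∃ y ∈ F τ, ∃ y' ∈ F τ, y ≠ y' ∧
          IsInitSeg (τ ++ [y]) (H b) ∧ IsInitSeg (τ ++ [y']) (H b')) ∧
      -- (ii) convergence condition on `B₁`
      (∀ N : ℕ,
        {b ∈ B₁ | ∀ c ∈ C, ¬ IsInitSeg ((List.range N).map (H b)) c}.Finite) := by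
  classical
  haveI : Nonempty (Fin m) := ⟨⟨j, hjm⟩⟩
  -- infinite columns
  obtain ⟨S, hScard, hS⟩ : ∃ S : Finset (Fin n), S.card = i + 1 ∧
      ∀ c ∈ S, {p ∈ A | p.2 = c}.Infinite := by
    set T : Finset (Fin n) := Finset.univ.filter (fun c => {p ∈ A | p.2 = c}.Infinite) with hT
    by_cases hTc : i + 1 ≤ T.card
    · obtain ⟨S, hST, hSc⟩ := Finset.exists_subset_card_eq hTc
      refine ⟨S, hSc, fun c hc => ?_⟩
      have := hST hc
      rw [hT, Finset.mem_filter] at this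
      exact this.2
    · exfalso
      apply hA
      obtain ⟨a, haT, hac⟩ := Finset.exists_superset_card_eq (s := T) (n := i) (by omega)
        (by simpa using hin.le)
      have hfin : {p ∈ A | p.2 ∉ a}.Finite := by
        have : ∀ c : Fin n, c ∉ a → {p ∈ A | p.2 = c}.Finite := by
          intro c hc
          by_contra hinf
          exact hc (haT (by rw [hT, Finset.mem_filter]; exact ⟨Finset.mem_univ _, hinf⟩))
        refine (Set.Finite.biUnion (Set.toFinite {c : Fin n | c ∉ a}) this).subset ?_
        intro p hp
        exact Set.mem_biUnion (show p.2 ∈ {c : Fin n | c ∉ a} from hp.2) ⟨hp.1, rfl⟩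
      obtain ⟨k, hk⟩ := (hfin.image Prod.fst).bddAbove
      refine ⟨a, k + 1, hac, fun p hp => ?_⟩
      by_cases hpa : p.2 ∈ a
      · exact Or.inl hpa
      · exact Or.inr ⟨Nat.lt_succ_of_le (hk ⟨p, ⟨hp, hpa⟩, rfl⟩), hpa⟩
  set Conv : Fin n → Prop := fun c => ∃ (X' : Set (ℕ × Fin n)) (l : ℕ → ℕ × Fin m),
      X' ⊆ {p ∈ A | p.2 = c} ∧ X'.Infinite ∧
      ∀ N : ℕ, {b ∈ X' | ¬ IsInitSeg ((List.range N).map (H b)) l}.Finite with hConv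
  have h1 : ∀ c, Conv c → _ := fun c hc => hc
  have h2 : ∀ c, (c ∈ S ∧ ¬ Conv c) → _ :=
    fun c hc => column_dichotomy H _ (hS c hc.1) hc.2
  choose! U l hUA hUinf hUl using h1
  choose! τ d V hVA hVinf hVτ hVinj using h2
  set K : Finset (Fin n) := S.filter (fun c => ¬ Conv c) with hK
  have hKS : ∀ c ∈ K, c ∈ S ∧ ¬ Conv c := fun c hc => by rwa [hK, Finset.mem_filter] at hc
  have hKcard : K.card ≤ j := (Finset.card_filter_le _ _).trans (by omega)
  -- entries of the stems
  set D : Set (ℕ × Fin m) := {z | ∃ c ∈ K, z ∈ τ c} with hD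
  have hDfin : D.Finite := by
    refine (Set.Finite.biUnion K.finite_toSet (fun c _ => (τ c).finite_toSet)).subset ?_
    rintro z ⟨c, hc, hz⟩
    exact Set.mem_biUnion (show c ∈ (K : Set (Fin n)) from hc) hz
  obtain ⟨k, hk⟩ := (hDfin.image Prod.fst).bddAbove
  set y : ℕ × Fin n → ℕ × Fin m := fun b => H b (τ b.2).length with hy
  have hyinj : ∀ c ∈ K, Set.InjOn y (V c) := by
    intro c hc b hb b' hb' hbb
    have e1 := (hVA c (hKS c hc) hb).2
    have e2 := (hVA c (hKS c hc) hb').2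
    apply hVinj c (hKS c hc) hb hb'
    simpa [hy, e1, e2] using hbb
  obtain ⟨f, hf, hfX⟩ := exists_inj_countable (ι := ℕ × {c // c ∈ K})
    (fun q => (y '' V q.2.1) \ D)
    (fun q => ((hVinf _ (hKS _ q.2.2)).image (hyinj _ q.2.2)).diff hDfin)
  have hpt : ∀ q : ℕ × {c // c ∈ K}, ∃ b ∈ V q.2.1, y b = f q := fun q => (hfX q).1
  choose w hwV hwf using hpt
  have hw : w.Injective := fun q q' h => hf (by rw [← hwf, ← hwf, h])
  have hwcol : ∀ q, (w q).2 = q.2.1 := fun q => (hVA _ (hKS _ q.2.2) (hwV q)).2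
  have hsup : ∀ σ : List (ℕ × Fin m), ∃ a : Finset (Fin m), a.card = j ∧
      ∀ c ∈ K, τ c = σ → d c ∈ a := by
    intro σ
    obtain ⟨a, ha, hac⟩ := Finset.exists_superset_card_eq
      (s := (K.filter (fun c => τ c = σ)).image d) (n := j)
      (Finset.card_image_le.trans ((Finset.card_filter_le _ _).trans hKcard))
      (by simpa using hjm.le)
    refine ⟨a, hac, fun c hc hcσ => ha ?_⟩
    exact Finset.mem_image_of_mem _ (Finset.mem_filter.2 ⟨hc, hcσ⟩)
  choose a hac ha using hsup
  have hinit : ∀ q, IsInitSeg (τ q.2.1) (H (w q)) := fun q => (hVτ _ (hKS _ q.2.2) _ (hwV q)).1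
  have hend : ∀ q, (H (w q) (τ q.2.1).length).2 = d q.2.1 :=
    fun q => (hVτ _ (hKS _ q.2.2) _ (hwV q)).2
  have hval : ∀ q, H (w q) (τ q.2.1).length = f q := fun q => by
    rw [← hwf q, hy]; simp only [hwcol]
  have hinD : ∀ q p, p < (τ q.2.1).length → H (w q) p ∈ D := by
    intro q p hp
    rw [← (isInitSeg_iff _ _).1 (hinit q) p hp]
    exact ⟨_, q.2.2, List.getElem_mem hp⟩
  have hpre : ∀ q p, p ≤ (τ q.2.1).length → (List.range p).map (H (w q)) <+: τ q.2.1 := by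
    intro q p hp
    have := hinit q
    unfold IsInitSeg at this
    rw [this]
    obtain ⟨r, hr⟩ := Nat.exists_eq_add_of_le hp
    rw [hr, List.range_add, List.map_append]
    exact List.prefix_append _ _
  have hmemF : ∀ q p, p ≤ (τ q.2.1).length →
      H (w q) p ∈ Bset m (a ((List.range p).map (H (w q)))) (k + 1) := by
    intro q p hp
    rcases hp.lt_or_eq with hlt | heq
    · by_cases hm : (H (w q) p).2 ∈ a ((List.range p).map (H (w q)))
      · exact Or.inl hm
      · exact Or.inr ⟨Nat.lt_succ_of_le (hk ⟨_, hinD q p hlt, rfl⟩), hm⟩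
    · left
      subst heq
      rw [hend]
      exact ha _ _ q.2.2 (hinit q)
  refine ⟨{σ | ∃ c ∈ K, σ <+: τ c}, fun σ => Bset m (a σ) (k + 1), l '' (S : Set (Fin n)),
    Set.range w, {b | ∃ c ∈ S, Conv c ∧ b ∈ U c}, ?_, ?_, ?_, ?_, ?_, ?_, ?_, ?_, ?_⟩
  · refine (Set.Finite.biUnion K.finite_toSet (fun c _ => (τ c).inits.finite_toSet)).subset ?_
    rintro z ⟨c, hc, hz⟩
    exact Set.mem_biUnion (show c ∈ (K : Set (Fin n)) from hc) (by simpa using hz)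
  · rintro s ⟨c, hc, hs⟩ r hr
    exact ⟨c, hc, hr.trans hs⟩
  · intro σ _
    exact ⟨a σ, k + 1, hac σ, rfl⟩
  · exact S.finite_toSet.image _
  · rintro _ ⟨q, rfl⟩
    exact (hVA _ (hKS _ q.2.2) (hwV q)).1
  · rintro b ⟨c, _, hc, hb⟩
    exact (hUA c hc hb).1
  · rintro ⟨a', k', ha', hsub⟩
    obtain ⟨c, hcS, hca⟩ := Finset.exists_mem_notMem_of_card_lt_card (s := a') (t := S) (by omega)
    have hfin : {p : ℕ × Fin n | p.2 = c ∧ p ∈ Bset n a' k'}.Finite := by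
      refine ((Set.finite_lt_nat k').image (fun x => (x, c))).subset ?_
      rintro ⟨x, c'⟩ ⟨h, hB⟩
      simp only at h
      subst h
      rcases hB with hB | hB
      · exact absurd hB hca
      · exact ⟨x, hB.1, rfl⟩
    by_cases hc : Conv c
    · apply hUinf c hc
      refine hfin.subset fun b hb => ⟨(hUA c hc hb).2, hsub (Or.inr ⟨c, hcS, hc, hb⟩)⟩
    · have hcK : c ∈ K := by rw [hK, Finset.mem_filter]; exact ⟨hcS, hc⟩
      have hinj : (fun x : ℕ => w (x, ⟨c, hcK⟩)).Injective := by
        intro x x' h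
        exact congrArg Prod.fst (hw h)
      apply Set.infinite_range_of_injective hinj
      refine hfin.subset ?_
      rintro _ ⟨x, rfl⟩
      exact ⟨hwcol _, hsub (Or.inl ⟨_, rfl⟩)⟩
  · rintro _ ⟨q, rfl⟩ _ ⟨q', rfl⟩ hne
    have hqq : q ≠ q' := fun h => hne (by rw [h])
    have hex : ∃ p, p ≤ (τ q.2.1).length ∧ p ≤ (τ q'.2.1).length ∧ H (w q) p ≠ H (w q') p := by
      by_contra hcon
      push Not at hcon
      rcases lt_trichotomy (τ q.2.1).length (τ q'.2.1).length with hlt | heq | hlt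
      · have e := hcon _ le_rfl hlt.le
        have := hinD q' _ hlt
        rw [← e, hval] at this
        exact (hfX q).2 this
      · have e := hcon _ le_rfl heq.le
        rw [hval, heq, hval] at e
        exact hqq (hf e)
      · have e := hcon _ hlt.le le_rfl
        have := hinD q _ hlt
        rw [e, hval] at this
        exact (hfX q').2 this
    obtain ⟨hp1, hp2, hp3⟩ := Nat.find_spec hex
    have hmin := fun p' (h : p' < Nat.find hex) => Nat.find_min hex h
    generalize Nat.find hex = p at hp1 hp2 hp3 hmin
    have hagree : ∀ p' < p, H (w q) p' = H (w q') p' := by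
      intro p' hp'
      by_contra hcon
      exact hmin p' hp' ⟨by omega, by omega, hcon⟩
    have hmap : (List.range p).map (H (w q)) = (List.range p).map (H (w q')) := by
      apply List.map_congr_left
      intro p' hp'
      exact hagree p' (List.mem_range.1 hp')
    refine ⟨(List.range p).map (H (w q)), ⟨_, q.2.2, hpre q p hp1⟩, H (w q) p, hmemF q p hp1,
      H (w q') p, ?_, hp3, ?_, ?_⟩
    · rw [hmap]
      exact hmemF q' p hp2
    · rw [isInitSeg_snoc, isInitSeg_map]
      simp
    · rw [isInitSeg_snoc, isInitSeg_map]
      exact ⟨hagree, by simp⟩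
  · intro N
    refine (Set.Finite.biUnion (Set.toFinite {c : Fin n | c ∈ S ∧ Conv c})
      (fun c hc => hUl c hc.2 N)).subset ?_
    rintro b ⟨⟨c, hcS, hc, hb⟩, hbC⟩
    refine Set.mem_biUnion (show c ∈ {c : Fin n | c ∈ S ∧ Conv c} from ⟨hcS, hc⟩) ⟨hb, ?_⟩
    exact hbC _ ⟨c, hcS, rfl⟩
end

section
/- For integers j, n, m with j < n ≤ m, the least cardinality of a family 𝓣 of 𝓑_n^j-trees such that every element of (ω × {0,…,n−1})^ω lies in the closure of some tree in 𝓣 is equal to the least cardinality of a family 𝓢 of 𝓑_m^j-trees such that every element of (ω × {0,…,m−1})^ω lies in the closure of some tree in 𝓢. Equivalently, cov(𝓙_{𝓑_n^j}) = cov(𝓙_{𝓑_m^j}). -/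
open Cardinal

/-- A `𝓑_n^i`-tree: a set of finite sequences from `ω × {0,…,n−1}`, closed under initial
segments, in which the set of immediate successors of each node is contained in some
`B_n(a,k)` with `a` an `i`-element subset of `{0,…,n−1}`. -/
def IsBnTree (n i : ℕ) (T : Set (List (ℕ × Fin n))) : Prop :=
  (∀ s ∈ T, ∀ r : List (ℕ × Fin n), r <+: s → r ∈ T) ∧
  ∀ t ∈ T, ∃ (a : Finset (Fin n)) (k : ℕ), a.card = i ∧
    {x : ℕ × Fin n | t ++ [x] ∈ T} ⊆ Bset n a k

/-- The closure of a tree of finite sequences: all infinite branches through it. -/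
def treeClosure {Y : Type*} (T : Set (List Y)) : Set (ℕ → Y) :=
  {f | ∀ N : ℕ, (List.range N).map f ∈ T}

/-- `cov(𝓙_{𝓑_n^i})`: the least cardinality of a family of `𝓑_n^i`-trees whose closures
cover `(ω × {0,…,n−1})^ω`. -/
noncomputable def covB (n i : ℕ) : Cardinal :=
  sInf {c : Cardinal | ∃ 𝓣 : Set (Set (List (ℕ × Fin n))),
    (∀ T ∈ 𝓣, IsBnTree n i T) ∧
    (∀ f : ℕ → ℕ × Fin n, ∃ T ∈ 𝓣, f ∈ treeClosure T) ∧ #𝓣 = c}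

/-- It suffices that the free colours number at most `i`. -/
theorem isBnTree_of_le {n i : ℕ} (hi : i ≤ n) {T : Set (List (ℕ × Fin n))}
    (h1 : ∀ s ∈ T, ∀ r : List (ℕ × Fin n), r <+: s → r ∈ T)
    (h2 : ∀ t ∈ T, ∃ (a : Finset (Fin n)) (k : ℕ), a.card ≤ i ∧
      ∀ x : ℕ × Fin n, t ++ [x] ∈ T → x.2 ∉ a → x.1 < k) : IsBnTree n i T := by
  refine ⟨h1, fun t ht => ?_⟩
  obtain ⟨a, k, ha, h⟩ := h2 t ht
  obtain ⟨b, hab, hb⟩ := Finset.exists_superset_card_eq ha (by simpa using hi)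
  refine ⟨b, k, hb, fun x hx => ?_⟩
  by_cases hxb : x.2 ∈ b
  · exact Or.inl hxb
  · exact Or.inr ⟨h x hx (fun hh => hxb (hab hh)), hxb⟩

/-- Recolouring. -/
def recol {n m : ℕ} (p : Fin m → Fin n) (x : ℕ × Fin m) : ℕ × Fin n := (x.1, p x.2)

theorem mem_closure_recol {n m : ℕ} (p : Fin m → Fin n) (f : ℕ → ℕ × Fin m)
    {T : Set (List (ℕ × Fin n))} (h : (fun N => recol p (f N)) ∈ treeClosure T) (N : ℕ) :
    ((List.range N).map f).map (recol p) ∈ T := by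
  have := h N
  rw [List.map_map]
  exact this

/-- The covering families. -/
def IsCov (n i : ℕ) (F : Set (Set (List (ℕ × Fin n)))) : Prop :=
  (∀ T ∈ F, IsBnTree n i T) ∧ ∀ f : ℕ → ℕ × Fin n, ∃ T ∈ F, f ∈ treeClosure T

theorem pull_isBnTree {j n m : ℕ} (hjn : j < n) (hnm : n ≤ m)
    (F : (Fin m → Fin n) → Set (List (ℕ × Fin n))) (hF : ∀ p, IsBnTree n j (F p)) :
    IsBnTree m j {t | ∀ p, t.map (recol p) ∈ F p} := by
  classical
  refine isBnTree_of_le (by omega) ?_ ?_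
  · intro s hs r hr p
    exact (hF p).1 _ (hs p) _ (hr.map _)
  · intro t ht
    have key := fun p => (hF p).2 _ (ht p)
    choose a k hcard hsub using key
    -- good colours are those bounded by some recolouring
    let A : Finset (Fin m) := Finset.univ.filter (fun i => ∀ p, p i ∈ a p)
    refine ⟨A, ∑ p, k p, ?_, ?_⟩
    · by_contra hlt
      obtain ⟨S, hSA, hS⟩ := Finset.exists_subset_card_eq (s := A) (n := j + 1) (by omega)
      let e : S → Fin n := fun x => Fin.castLE (by omega) (S.equivFin x)
      have he : Function.Injective e := by
        intro x y hxy
        exact S.equivFin.injective (Fin.castLE_injective _ hxy)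
      let p : Fin m → Fin n := fun i => if h : i ∈ S then e ⟨i, h⟩ else ⟨0, by omega⟩
      have := Finset.card_le_card_of_injOn (s := S) (t := a p) p
        (fun i hi => (Finset.mem_filter.1 (hSA hi)).2 p)
        (by
          intro x hx y hy hxy
          have hx' : x ∈ S := hx
          have hy' : y ∈ S := hy
          simp only [p, dif_pos hx', dif_pos hy'] at hxy
          exact congrArg Subtype.val (he hxy))
      have := hcard p
      omega
    · intro x hx hxA
      have : ∃ p : Fin m → Fin n, p x.2 ∉ a p := by
        by_contra hcon
        push Not at hcon
        exact hxA (Finset.mem_filter.2 ⟨Finset.mem_univ _, hcon⟩)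
      obtain ⟨p, hp⟩ := this
      have h1 : recol p x ∈ Bset n (a p) (k p) := by
        apply hsub p
        have := hx p
        simpa using this
      rcases h1 with h1 | h1
      · exact absurd h1 hp
      · exact lt_of_lt_of_le h1.1
          (Finset.single_le_sum (f := k) (fun _ _ => Nat.zero_le _) (Finset.mem_univ p))

theorem exists_escape {n j : ℕ} (hjn : j < n) {T : Set (List (ℕ × Fin n))}
    (hT : IsBnTree n j T) (t : List (ℕ × Fin n)) : ∃ x, t ++ [x] ∉ T := by
  by_cases ht : t ∈ T
  · obtain ⟨a, k, ha, h⟩ := hT.2 t ht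
    obtain ⟨c, hc⟩ : ∃ c, c ∉ a := by
      by_contra hcon
      push Not at hcon
      have : a = Finset.univ := Finset.eq_univ_iff_forall.2 hcon
      rw [this] at ha
      simp at ha
      omega
    refine ⟨(k, c), fun hx => ?_⟩
    rcases h hx with h | h
    · exact hc h
    · exact lt_irrefl _ h.1
  · exact ⟨(0, ⟨0, by omega⟩), fun h => ht (hT.1 _ h _ (List.prefix_append _ _))⟩

theorem cov_infinite {n j : ℕ} (hjn : j < n) {F : Set (Set (List (ℕ × Fin n)))}
    (hF : IsCov n j F) : Infinite F := by
  by_contra hfin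
  rw [not_infinite_iff_finite] at hfin
  have hne : Nonempty F := by
    obtain ⟨T, hT, _⟩ := hF.2 (fun _ => (0, ⟨0, by omega⟩))
    exact ⟨⟨T, hT⟩⟩
  obtain ⟨e, he⟩ := exists_surjective_nat F
  have key := fun (k : ℕ) (t : List (ℕ × Fin n)) => exists_escape hjn (hF.1 _ (e k).2) t
  choose x hx using key
  let L : ℕ → List (ℕ × Fin n) := fun k => Nat.rec [] (fun k l => l ++ [x k l]) k
  have hL : ∀ k, (List.range k).map (fun k => x k (L k)) = L k := by
    intro k
    induction k with
    | zero => rfl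
    | succ k ih => rw [List.range_succ, List.map_append, ih]; rfl
  obtain ⟨T, hT, hc⟩ := hF.2 (fun k => x k (L k))
  obtain ⟨k, hk⟩ := he ⟨T, hT⟩
  have h1 := hc (k + 1)
  rw [hL] at h1
  apply hx k (L k)
  rw [hk]
  exact h1

theorem cov_up {j n m : ℕ} (hjn : j < n) (hnm : n ≤ m) {F : Set (Set (List (ℕ × Fin n)))}
    (hF : IsCov n j F) : ∃ G, IsCov m j G ∧ #G ≤ #F := by
  have hinf := cov_infinite hjn hF
  let Φ : ((Fin m → Fin n) → F) → Set (List (ℕ × Fin m)) :=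
    fun H => {t | ∀ p, t.map (recol p) ∈ (H p).1}
  refine ⟨Set.range Φ, ⟨?_, ?_⟩, ?_⟩
  · rintro _ ⟨H, rfl⟩
    exact pull_isBnTree hjn hnm (fun p => (H p).1) (fun p => hF.1 _ (H p).2)
  · intro f
    have key := fun p : Fin m → Fin n => hF.2 (fun N => recol p (f N))
    choose H hH hc using key
    refine ⟨_, ⟨fun p => ⟨H p, hH p⟩, rfl⟩, fun N p => ?_⟩
    exact mem_closure_recol p f (hc p) N
  · refine mk_range_le.trans ?_
    rw [← Cardinal.power_def, Cardinal.mk_fintype (Fin m → Fin n)]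
    exact Cardinal.power_nat_le (Cardinal.aleph0_le_mk F)

theorem cov_down {j n m : ℕ} (hjn : j < n) (hnm : n ≤ m) {F : Set (Set (List (ℕ × Fin m)))}
    (hF : IsCov m j F) : ∃ G, IsCov n j G ∧ #G ≤ #F := by
  classical
  let q : Fin n → Fin m := Fin.castLE hnm
  have hq : Function.Injective q := Fin.castLE_injective hnm
  refine ⟨Set.image (fun T => {t | t.map (recol q) ∈ T}) F, ⟨?_, ?_⟩, mk_image_le⟩
  · rintro _ ⟨T, hT, rfl⟩
    refine isBnTree_of_le hjn.le ?_ ?_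
    · intro s hs r hr
      exact (hF.1 T hT).1 _ hs _ (hr.map _)
    · intro t ht
      obtain ⟨a, k, ha, h⟩ := (hF.1 T hT).2 _ ht
      refine ⟨Finset.univ.filter (fun i => q i ∈ a), k, ?_, ?_⟩
      · rw [← ha]
        exact Finset.card_le_card_of_injOn q (fun i hi => (Finset.mem_filter.1 hi).2) hq.injOn
      · intro x hx hxa
        have h1 : recol q x ∈ Bset m a k := by
          apply h
          simpa using hx
        rcases h1 with h1 | h1
        · exact (hxa (Finset.mem_filter.2 ⟨Finset.mem_univ x.2, h1⟩)).elim
        · exact h1.1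
  · intro f
    obtain ⟨T, hT, hc⟩ := hF.2 (fun N => recol q (f N))
    exact ⟨_, ⟨T, hT, rfl⟩, fun N => mem_closure_recol q f hc N⟩

theorem covB_le {n m i j : ℕ}
    (h : ∀ F, IsCov m j F → ∃ G, IsCov n i G ∧ #G ≤ #F)
    (h' : ∀ F, IsCov n i F → ∃ G, IsCov m j G ∧ #G ≤ #F) : covB n i ≤ covB m j := by
  by_cases hne : ∃ F, IsCov m j F
  · obtain ⟨F₀, hF₀⟩ := hne
    refine le_csInf ⟨_, F₀, hF₀.1, hF₀.2, rfl⟩ ?_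
    rintro c ⟨F, h1, h2, rfl⟩
    obtain ⟨G, hG, hle⟩ := h F ⟨h1, h2⟩
    refine le_trans ?_ hle
    exact csInf_le' ⟨G, hG.1, hG.2, rfl⟩
  · have : covB n i = 0 := by
      unfold covB
      convert Cardinal.sInf_empty
      rw [Set.eq_empty_iff_forall_notMem]
      rintro c ⟨F, h1, h2, -⟩
      obtain ⟨G, hG, -⟩ := h' F ⟨h1, h2⟩
      exact hne ⟨G, hG⟩
    rw [this]
    exact zero_le

theorem stmt8 (j n m : ℕ) (hjn : j < n) (hnm : n ≤ m) : covB n j = covB m j :=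
  le_antisymm
    (covB_le (fun _ hF => cov_down hjn hnm hF) (fun _ hF => cov_up hjn hnm hF))
    (covB_le (fun _ hF => cov_up hjn hnm hF) (fun _ hF => cov_down hjn hnm hF))
end

section
/- Let 𝓑 be a cover on a countably infinite set X and let (T_n)_{n∈ω} be a countable family of 𝓑-trees. Then the union of the closures T̄_n is not all of X^ω; that is, there exists f ∈ X^ω such that for every n some finite initial segment of f is not in T_n. (In particular the σ-ideal 𝓙_𝓑 generated by closures of 𝓑-trees is a proper ideal.) -/
/-- A cover on a (countable) set `X`: a countable family of subsets of `X` not containing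
`X` itself and closed under adding finite sets. -/
def IsCover {X : Type*} (B : Set (Set X)) : Prop :=
  B.Countable ∧ Set.univ ∉ B ∧ ∀ A ∈ B, ∀ b : Set X, b.Finite → A ∪ b ∈ B

/-- A `𝓑`-tree: a set of finite sequences from `X`, closed under initial segments, in which
the set of immediate successors of each node is contained in some member of `𝓑`. -/
def IsBTree {X : Type*} (B : Set (Set X)) (T : Set (List X)) : Prop :=
  (∀ s ∈ T, ∀ r : List X, r <+: s → r ∈ T) ∧
  ∀ t ∈ T, ∃ A ∈ B, {x : X | t ++ [x] ∈ T} ⊆ A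

theorem stmt10 {X : Type*} [Countable X] [Infinite X]
    (B : Set (Set X)) (hB : IsCover B)
    (T : ℕ → Set (List X)) (hT : ∀ n, IsBTree B (T n)) :
    (⋃ n, treeClosure (T n)) ≠ Set.univ ∧
    ∃ f : ℕ → X, ∀ n : ℕ, ∃ N : ℕ, (List.range N).map f ∉ T n := by
  have key : ∀ (n : ℕ) (s : List X), ∃ x : X, s ++ [x] ∉ T n := by
    intro n s
    by_contra! h
    have hs : s ∈ T n := by
      obtain ⟨x⟩ : Nonempty X := inferInstance
      exact (hT n).1 _ (h x) s (List.prefix_append _ _)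
    obtain ⟨A, hA, hsub⟩ := (hT n).2 s hs
    have : A = Set.univ := Set.eq_univ_of_forall fun x => hsub (h x)
    exact hB.2.1 (this ▸ hA)
  choose g hg using key
  let L : ℕ → List X := fun n => Nat.rec [] (fun k l => l ++ [g k l]) n
  have hL : ∀ n, (List.range n).map (fun k => g k (L k)) = L n := by
    intro n
    induction n with
    | zero => rfl
    | succ k ih =>
      rw [List.range_succ, List.map_append, ih]
      rfl
  have hf : ∃ f : ℕ → X, ∀ n : ℕ, ∃ N : ℕ, (List.range N).map f ∉ T n := by
    refine ⟨fun k => g k (L k), fun n => ⟨n + 1, ?_⟩⟩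
    rw [hL]
    exact hg n (L n)
  refine ⟨?_, hf⟩
  obtain ⟨f, hf⟩ := hf
  intro h
  have hm : f ∈ ⋃ n, treeClosure (T n) := h ▸ Set.mem_univ f
  obtain ⟨n, hn⟩ := Set.mem_iUnion.1 hm
  obtain ⟨N, hN⟩ := hf n
  exact hN (hn N)
end
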